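/- arXiv:2312.05478 — 2 statements merged into one kernel-verified Lean document; each statement's English description precedes it below -/
import Mathlib

section
/- Let α = (a,b) be a partition (a ≥ b ≥ 0), let a_1,a_2,a_3,b_1,b_2,b_3 be nonnegative integers with a = a_1+a_2+a_3 and b = b_1+b_2+b_3, and let x ∈ Λ^{a_1+b_1}, y ∈ Λ^{a_2+b_2}, z ∈ Λ^{a_3+b_3}. Write Δ_{a_i,b_i} of x, y, z in Sweedler form as Σ_u x_u(a_1)⊗x'_u(b_1), Σ_v y_v(a_2)⊗y'_v(b_2), Σ_w z_w(a_3)⊗z'_w(b_3), and set ω = Σ_{u,v,w} x_u(a_1)∧y_v(a_2)∧z_w(a_3) ⊗ x'_u(b_1)∧y'_v(b_2)∧z'_w(b_3) ∈ Λ^a⊗Λ^b. If b_1 ≤ a_2+a_3, then in L_α one has π_α(ω) = (−1)^{(a_2+a_3+1)b_1} · Σ_{i_2,i_3} (−1)^{i_2(a_3−i_3)+i_3·b_2} C(b_2+i_2,b_2) C(b_3+i_3,b_3) · π_α( Σ_{v,w} x∧y_v(a_2−i_2)∧z_w(a_3−i_3) ⊗ y'_v(b_2+i_2)∧z'_w(b_3+i_3)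 ), where the outer sum is over all nonnegative integers i_2, i_3 with i_2+i_3 = b_1, i_2 ≤ a_2 and i_3 ≤ a_3. -/
open TensorProduct

set_option synthInstance.maxHeartbeats 1000000
set_option maxSynthPendingDepth 3
set_option maxHeartbeats 1000000

noncomputable section

namespace MMS

variable (K : Type) [Field K] [CharZero K] (n : ℕ)

/-- `V = K^n`, the natural module of `G = GL(n,K)`. -/
abbrev V : Type := Fin n → K

/-- `Λ^p`, the `p`-th exterior power of `V`. -/
abbrev Lam (p : ℕ) : Type := ⋀[K]^p (V K n)

/-- The wedge `v_1 ∧ ⋯ ∧ v_p ∈ Λ^p`. -/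
def wedge {p : ℕ} (v : Fin p → V K n) : Lam K n p :=
  ⟨ExteriorAlgebra.ιMulti K p v, ExteriorAlgebra.ιMulti_range K p (Set.mem_range_self v)⟩

/-- Transport along an equality of degrees. -/
def ecast {p q : ℕ} (h : p = q) : Lam K n p ≃ₗ[K] Lam K n q :=
  h ▸ LinearEquiv.refl K (Lam K n p)

/-- `m` is the wedge multiplication map `Λ^p ⊗ Λ^q → Λ^{p+q}`. -/
def IsMulMap (p q : ℕ) (m : Lam K n p ⊗[K] Lam K n q →ₗ[K] Lam K n (p+q)) : Prop :=
  ∀ (v : Fin p → V K n) (w : Fin q → V K n),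
    m (wedge K n v ⊗ₜ[K] wedge K n w) = wedge K n (Fin.append v w)

/-- The set of `(p,q)`-shuffles: permutations `σ` of `{1, …, p+q}` which are strictly
increasing on the first `p` and on the last `q` indices. -/
def shuffles (p q : ℕ) : Finset (Equiv.Perm (Fin (p+q))) :=
  Finset.univ.filter (fun σ =>
    (∀ i j : Fin (p+q), i < j → (j : ℕ) < p → σ i < σ j) ∧
    (∀ i j : Fin (p+q), i < j → p ≤ (i : ℕ) → σ i < σ j))

/-- `D` is the component `Δ_{p,q} : Λ^{p+q} → Λ^p ⊗ Λ^q` of the comultiplication, i.e.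
`Δ_{p,q}(v_1 ∧ ⋯ ∧ v_{p+q}) = Σ_σ sgn(σ) (v_{σ(1)} ∧ ⋯ ∧ v_{σ(p)}) ⊗ (v_{σ(p+1)} ∧ ⋯ ∧ v_{σ(p+q)})`,
the sum being over all `(p,q)`-shuffles. -/
def IsComulMap (p q : ℕ) (D : Lam K n (p+q) →ₗ[K] Lam K n p ⊗[K] Lam K n q) : Prop :=
  ∀ v : Fin (p+q) → V K n,
    D (wedge K n v) =
      ∑ σ ∈ shuffles p q,
        (Equiv.Perm.sign σ : ℤ) •
          (wedge K n (fun i => v (σ (Fin.castAdd q i))) ⊗ₜ[K]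
            wedge K n (fun i => v (σ (Fin.natAdd p i))))

variable (mf : ∀ p q : ℕ, Lam K n p ⊗[K] Lam K n q →ₗ[K] Lam K n (p+q))
variable (Df : ∀ p q : ℕ, Lam K n (p+q) →ₗ[K] Lam K n p ⊗[K] Lam K n q)

/-- The map `δ_t = (m ⊗ 1) ∘ (1 ⊗ Δ_{t,b-t}) : Λ^a ⊗ Λ^b → Λ^{a+t} ⊗ Λ^{b-t}`. -/
def deltaMap (a b t : ℕ) (ht : t ≤ b) :
    Lam K n a ⊗[K] Lam K n b →ₗ[K] Lam K n (a+t) ⊗[K] Lam K n (b-t) :=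
  (TensorProduct.map (mf a t) LinearMap.id)
    ∘ₗ (TensorProduct.assoc K (Lam K n a) (Lam K n t) (Lam K n (b-t))).symm.toLinearMap
    ∘ₗ (TensorProduct.map LinearMap.id
        ((Df t (b-t)) ∘ₗ (ecast K n (by omega : b = t + (b-t))).toLinearMap))

/-- The map `θ_t = (1 ⊗ m) ∘ (Δ_{a-t,t} ⊗ 1) : Λ^a ⊗ Λ^b → Λ^{a-t} ⊗ Λ^{b+t}`. -/
def thetaMap (a b t : ℕ) (ht : t ≤ a) :
    Lam K n a ⊗[K] Lam K n b →ₗ[K] Lam K n (a-t) ⊗[K] Lam K n (b+t) :=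
  (TensorProduct.map LinearMap.id
      ((ecast K n (by omega : t + b = b + t)).toLinearMap ∘ₗ mf t b))
    ∘ₗ (TensorProduct.assoc K (Lam K n (a-t)) (Lam K n t) (Lam K n b)).toLinearMap
    ∘ₗ (TensorProduct.map
        ((Df (a-t) t) ∘ₗ (ecast K n (by omega : a = (a-t) + t)).toLinearMap) LinearMap.id)

/-- The map `Φ_t = θ_t ∘ δ_t : Λ^a ⊗ Λ^b → Λ^a ⊗ Λ^b`. -/
def PhiMap (a b t : ℕ) (hta : t ≤ a) (htb : t ≤ b) :
    Lam K n a ⊗[K] Lam K n b →ₗ[K] Lam K n a ⊗[K] Lam K n b :=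
  (TensorProduct.congr (ecast K n (by omega : a + t - t = a))
      (ecast K n (by omega : b - t + t = b))).toLinearMap
    ∘ₗ thetaMap K n mf Df (a+t) (b-t) t (by omega)
    ∘ₗ deltaMap K n mf Df a b t htb

/-- The map `Φ_t`, extended by `0` to all `t`. -/
def PhiMap' (a b t : ℕ) :
    Lam K n a ⊗[K] Lam K n b →ₗ[K] Lam K n a ⊗[K] Lam K n b :=
  if h : t ≤ a ∧ t ≤ b then PhiMap K n mf Df a b t h.1 h.2 else 0

/-- The map `θ_1 : Λ^{a+1} ⊗ Λ^{b-1} → Λ^a ⊗ Λ^b` (for `b ≥ 1`). -/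
def theta1 (a b : ℕ) (hb : 1 ≤ b) :
    Lam K n (a+1) ⊗[K] Lam K n (b-1) →ₗ[K] Lam K n a ⊗[K] Lam K n b :=
  (TensorProduct.congr (ecast K n (by omega : a + 1 - 1 = a))
      (ecast K n (by omega : b - 1 + 1 = b))).toLinearMap
    ∘ₗ thetaMap K n mf Df (a+1) (b-1) 1 (by omega)

/-- The submodule of relations defining the Schur module `L_{(a,b)}`: the image of
`θ_1` if `b ≥ 1`, and `0` if `b = 0`. -/
def schurRel (a b : ℕ) : Submodule K (Lam K n a ⊗[K] Lam K n b) :=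
  if hb : 1 ≤ b then LinearMap.range (theta1 K n mf Df a b hb) else ⊥

/-- The Schur module `L_{(a,b)}`, realized as the cokernel of `θ_1` (in characteristic zero). -/
abbrev SchurL (a b : ℕ) : Type :=
  (Lam K n a ⊗[K] Lam K n b) ⧸ schurRel K n mf Df a b

/-- The projection `π_{(a,b)} : Λ^a ⊗ Λ^b → L_{(a,b)}`. -/
def schurProj (a b : ℕ) : Lam K n a ⊗[K] Lam K n b →ₗ[K] SchurL K n mf Df a b :=
  (schurRel K n mf Df a b).mkQ

/-- The coefficient `c_t(a,b,i) = C(i,t)·C(a-b+t+i,t)`. -/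
def cCoef (a b t i : ℕ) : ℕ := (i.choose t) * ((a-b+t+i).choose t)

/-- The group `G = GL(n,K)`. -/
abbrev GLn : Type := Matrix.GeneralLinearGroup (Fin n) K

/-- `rho` is the family of natural actions of `G = GL(n,K)` on the exterior powers `Λ^p`
of the natural module `V = K^n`. -/
def IsExtAction (rho : ∀ p : ℕ, GLn K n → (Lam K n p →ₗ[K] Lam K n p)) : Prop :=
  ∀ (p : ℕ) (g : GLn K n) (v : Fin p → V K n),
    rho p g (wedge K n v) =
      wedge K n (fun i => Matrix.toLin' (g : Matrix (Fin n) (Fin n) K) (v i))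

/-- The action of `g ∈ GL(n,K)` on `Λ^a ⊗ Λ^b`. -/
def rhoT (rho : ∀ p : ℕ, GLn K n → (Lam K n p →ₗ[K] Lam K n p)) (a b : ℕ) (g : GLn K n) :
    Lam K n a ⊗[K] Lam K n b →ₗ[K] Lam K n a ⊗[K] Lam K n b :=
  TensorProduct.map (rho a g) (rho b g)

/-- The quotients `M₁ ⧸ N₁` and `M₂ ⧸ N₂` are isomorphic as representations, with respect
to the given actions `ρ₁, ρ₂` on `M₁` and `M₂` (which descend to the quotients). -/
def IsQuotIso {G' : Type} {M₁ M₂ : Type} [AddCommGroup M₁] [Module K M₁]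
    [AddCommGroup M₂] [Module K M₂]
    (N₁ : Submodule K M₁) (N₂ : Submodule K M₂)
    (ρ₁ : G' → M₁ →ₗ[K] M₁) (ρ₂ : G' → M₂ →ₗ[K] M₂) : Prop :=
  ∃ e : (M₁ ⧸ N₁) ≃ₗ[K] (M₂ ⧸ N₂),
    ∀ (g : G') (x : M₁) (y : M₂),
      e (Submodule.Quotient.mk x) = Submodule.Quotient.mk y →
      e (Submodule.Quotient.mk (ρ₁ g x)) = Submodule.Quotient.mk (ρ₂ g y)

/-- The "multiply in pairs" map
`(Λ^{p₁} ⊗ Λ^{q₁}) ⊗ (Λ^{p₂} ⊗ Λ^{q₂}) → Λ^{p₁+p₂} ⊗ Λ^{q₁+q₂}`. -/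
def pairMul (p₁ q₁ p₂ q₂ : ℕ) :
    (Lam K n p₁ ⊗[K] Lam K n q₁) ⊗[K] (Lam K n p₂ ⊗[K] Lam K n q₂) →ₗ[K]
      Lam K n (p₁+p₂) ⊗[K] Lam K n (q₁+q₂) :=
  (TensorProduct.map (mf p₁ p₂) (mf q₁ q₂))
    ∘ₗ (TensorProduct.tensorTensorTensorComm K (Lam K n p₁) (Lam K n q₁)
        (Lam K n p₂) (Lam K n q₂)).toLinearMap

/-- The map `φ_k = (m ⊗ m) ∘ (1 ⊗ τ ⊗ 1) ∘ (Δ_{a-k,k} ⊗ Δ_{k,b-k}) : Λ^a ⊗ Λ^b → Λ^a ⊗ Λ^b`. -/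
def phiSmall (a b k : ℕ) (hka : k ≤ a) (hkb : k ≤ b) :
    Lam K n a ⊗[K] Lam K n b →ₗ[K] Lam K n a ⊗[K] Lam K n b :=
  (TensorProduct.congr (ecast K n (by omega : (a-k) + k = a))
      (ecast K n (by omega : k + (b-k) = b))).toLinearMap
    ∘ₗ pairMul K n mf (a-k) k k (b-k)
    ∘ₗ (TensorProduct.map
        ((Df (a-k) k) ∘ₗ (ecast K n (by omega : a = (a-k) + k)).toLinearMap)
        ((Df k (b-k)) ∘ₗ (ecast K n (by omega : b = k + (b-k))).toLinearMap))

/-- The map `ψ_k = C(b,k)·1 - φ_k : Λ^a ⊗ Λ^b → Λ^a ⊗ Λ^b`. -/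
def psiSmall (a b k : ℕ) (hka : k ≤ a) (hkb : k ≤ b) :
    Lam K n a ⊗[K] Lam K n b →ₗ[K] Lam K n a ⊗[K] Lam K n b :=
  (Nat.choose b k : K) • LinearMap.id - phiSmall K n mf Df a b k hka hkb

/-- The map `β_k = (m ⊗ m) ∘ (1 ⊗ τ ⊗ 1) ∘ (Δ_{a-k,k} ⊗ 1 ⊗ 1) : Λ^a ⊗ (Λ^k ⊗ Λ^{b-k}) → Λ^a ⊗ Λ^b`. -/
def betaMap (a b k : ℕ) (hka : k ≤ a) (hkb : k ≤ b) :
    Lam K n a ⊗[K] (Lam K n k ⊗[K] Lam K n (b-k)) →ₗ[K] Lam K n a ⊗[K] Lam K n b :=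
  (TensorProduct.congr (ecast K n (by omega : (a-k) + k = a))
      (ecast K n (by omega : k + (b-k) = b))).toLinearMap
    ∘ₗ pairMul K n mf (a-k) k k (b-k)
    ∘ₗ (TensorProduct.map
        ((Df (a-k) k) ∘ₗ (ecast K n (by omega : a = (a-k) + k)).toLinearMap)
        LinearMap.id)

/-- The map `γ_k : Λ^a ⊗ (Λ^k ⊗ Λ^{b-k}) → Λ^a ⊗ Λ^b`,
`γ_k(x ⊗ y ⊗ z) = x ⊗ (y ∧ z) - β_k(x ⊗ y ⊗ z)`. -/
def gammaMap (a b k : ℕ) (hka : k ≤ a) (hkb : k ≤ b) :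
    Lam K n a ⊗[K] (Lam K n k ⊗[K] Lam K n (b-k)) →ₗ[K] Lam K n a ⊗[K] Lam K n b :=
  (TensorProduct.map LinearMap.id
      ((ecast K n (by omega : k + (b-k) = b)).toLinearMap ∘ₗ mf k (b-k)))
    - betaMap K n mf Df a b k hka hkb

/-- The quantity `d_k(a,b,t)` (for the given `i`), from Lemma 5.3 of the paper. -/
def dInt (a b k i t : ℕ) : ℤ :=
  1 - ∑ j ∈ Finset.Icc (i - min (b-k) i) t,
        (-1:ℤ)^j * ((a-k+j).choose (a-k) : ℤ) * ((b-k+t-i).choose (t-j) : ℤ)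

end MMS

namespace ExteriorAlgebra

open Polynomial

variable {R M N : Type*} [CommRing R] [AddCommGroup M] [Module R M]
  [AddCommGroup N] [Module R N]

theorem ι_mul_of_mem_exteriorPower (m : M) (p : ℕ) {u : ExteriorAlgebra R M}
    (hu : u ∈ ⋀[R]^p M) :
    ι R m * u = (-1 : R) ^ p • (u * ι R m) := by
  induction hu using Submodule.pow_induction_on_left' with
  | algebraMap r => simp [Algebra.commutes]
  | add x y i hx hy ihx ihy => rw [mul_add, ihx, ihy, add_mul, smul_add]
  | mem_mul w hw i x hx ih =>
    obtain ⟨w, rfl⟩ := hw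
    have h := ι_add_mul_swap (R := R) m w
    rw [← mul_assoc, eq_neg_of_add_eq_zero_left h, neg_mul, mul_assoc, ih, mul_smul_comm,
      mul_assoc, pow_succ, mul_neg_one, neg_smul]

/-- Elements of the exterior algebra commute up to the Koszul sign. -/
theorem mul_comm_of_mem_exteriorPower {p q : ℕ} {u w : ExteriorAlgebra R M}
    (hu : u ∈ ⋀[R]^p M) (hw : w ∈ ⋀[R]^q M) : u * w = (-1 : R) ^ (p * q) • (w * u) := by
  induction hu using Submodule.pow_induction_on_left' with
  | algebraMap r => simp [Algebra.commutes]
  | add x y i hx hy ihx ihy => rw [add_mul, ihx, ihy, mul_add, smul_add]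
  | mem_mul m hm i x hx ih =>
    obtain ⟨m, rfl⟩ := hm
    rw [mul_assoc, ih, mul_smul_comm, ← mul_assoc,
      ι_mul_of_mem_exteriorPower m q hw, smul_mul_assoc, smul_smul, mul_assoc,
      ← pow_add, Nat.succ_mul]

theorem map_mem_exteriorPower (f : M →ₗ[R] N) {p : ℕ} {u : ExteriorAlgebra R M}
    (hu : u ∈ ⋀[R]^p M) : map f u ∈ ⋀[R]^p N := by
  induction hu using Submodule.pow_induction_on_left' with
  | algebraMap r => simp
  | add x y i hx hy ihx ihy => rw [map_add]; exact add_mem ihx ihy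
  | mem_mul m hm i x hx ih =>
    obtain ⟨m, rfl⟩ := hm
    rw [map_mul, map_apply_ι, Nat.succ_eq_add_one, exteriorPower, pow_succ']
    exact Submodule.mul_mem_mul ⟨_, rfl⟩ ih

/-- The algebra map `Λ(M) → Λ(M)[X]` sending `m` to `m + X f(m)`; when `f² = 0` this is the
exponential of `X` times the derivation extending `f`. -/
def taylor (f : M →ₗ[R] M) : ExteriorAlgebra R M →ₐ[R] (ExteriorAlgebra R M)[X] :=
  lift R
    ⟨((monomial 0).restrictScalars R) ∘ₗ ι R
      + ((monomial 1).restrictScalars R) ∘ₗ ι R ∘ₗ f, fun m => by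
      simp only [LinearMap.add_apply, LinearMap.comp_apply, LinearMap.restrictScalars_apply,
        add_mul, mul_add, monomial_mul_monomial, ι_sq_zero, map_zero, zero_add,
        add_zero]
      rw [← map_add, ι_add_mul_swap, map_zero]⟩

theorem taylor_ι (f : M →ₗ[R] M) (m : M) :
    taylor f (ι R m) =
      monomial 0 (ι R m) + monomial 1 (ι R (f m)) := by
  simp [taylor]

/-- The `k`-th divided power of the derivation of `Λ(M)` extending `f` (when `f² = 0`). -/
def divPow (f : M →ₗ[R] M) (k : ℕ) :
    ExteriorAlgebra R M →ₗ[R] ExteriorAlgebra R M :=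
  (Polynomial.lcoeff (ExteriorAlgebra R M) k).restrictScalars R
    ∘ₗ (taylor f).toLinearMap

theorem divPow_apply (f : M →ₗ[R] M) (k : ℕ) (x : ExteriorAlgebra R M) :
    divPow f k x = (taylor f x).coeff k := rfl

theorem divPow_mul (f : M →ₗ[R] M) (k : ℕ) (x y : ExteriorAlgebra R M) :
    divPow f k (x * y) = ∑ ij ∈ Finset.HasAntidiagonal.antidiagonal k,
      divPow f ij.1 x * divPow f ij.2 y := by
  simp only [divPow_apply, map_mul, Polynomial.coeff_mul]

theorem divPow_zero (f : M →ₗ[R] M) (x : ExteriorAlgebra R M) :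
    divPow f 0 x = x := by
  induction x using ExteriorAlgebra.induction with
  | algebraMap r =>
    rw [divPow_apply, AlgHom.commutes, Polynomial.algebraMap_apply, coeff_C_zero]
  | ι m => simp [divPow_apply, taylor_ι, coeff_monomial]
  | mul a b ha hb => rw [divPow_mul]; simp [ha, hb]
  | add a b ha hb => rw [map_add, ha, hb]

theorem divPow_one_mul (f : M →ₗ[R] M) (x y : ExteriorAlgebra R M) :
    divPow f 1 (x * y) =
      divPow f 1 x * y + x * divPow f 1 y := by
  rw [divPow_mul, Finset.Nat.antidiagonal_succ]
  simp [divPow_zero, add_comm]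

theorem derivative_taylor {f : M →ₗ[R] M} (hf : f ∘ₗ f = 0)
    (x : ExteriorAlgebra R M) :
    derivative (taylor f x) =
      taylor f (divPow f 1 x) := by
  induction x using ExteriorAlgebra.induction with
  | algebraMap r =>
    rw [divPow_apply, AlgHom.commutes, Polynomial.algebraMap_apply, derivative_C, coeff_C]
    simp
  | ι m =>
    have : f (f m) = 0 := LinearMap.congr_fun hf m
    simp [divPow_apply, taylor_ι, this]
  | mul a b ha hb => rw [map_mul, derivative_mul, ha, hb, divPow_one_mul, map_add, map_mul, map_mul]
  | add a b ha hb => simp only [map_add, ha, hb]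

theorem divPow_divPow_one {f : M →ₗ[R] M} (hf : f ∘ₗ f = 0) (k : ℕ)
    (x : ExteriorAlgebra R M) :
    divPow f k (divPow f 1 x) =
      (k + 1 : R) • divPow f (k + 1) x := by
  rw [divPow_apply, ← derivative_taylor hf, coeff_derivative, divPow_apply]
  rw [add_smul, one_smul, mul_add, mul_one, ← Nat.cast_comm, ← nsmul_eq_mul, Nat.cast_smul_eq_nsmul]

theorem iterate_divPow_one {f : M →ₗ[R] M} (hf : f ∘ₗ f = 0) (k : ℕ)
    (x : ExteriorAlgebra R M) :
    (divPow f 1)^[k] x = (k.factorial : R) • divPow f k x := by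
  induction k generalizing x with
  | zero => simp [divPow_zero]
  | succ k ih =>
    rw [Function.iterate_succ_apply, ih, divPow_divPow_one hf, smul_smul, Nat.factorial_succ]
    push_cast
    rw [mul_comm]

theorem _root_.Polynomial.prod_ofFn_monomial {A : Type*} [Semiring A] {p : ℕ} (d : Fin p → ℕ)
    (w : Fin p → A) : (List.ofFn fun i => monomial (d i) (w i)).prod =
      monomial (∑ i, d i) (List.ofFn w).prod := by
  induction p with
  | zero => simp
  | succ p ih => simp [List.ofFn_succ, Fin.sum_univ_succ, ih, monomial_mul_monomial]

theorem divPow_ιMulti (f : M →ₗ[R] M) {p : ℕ} (k : ℕ) (v : Fin p → M) :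
    divPow f k (ιMulti R p v) =
      ∑ S ∈ Finset.powersetCard k (Finset.univ : Finset (Fin p)),
        ιMulti R p (S.piecewise (f ∘ v) v) := by
  have key (S : Finset (Fin p)) :
      (List.ofFn (S.piecewise (fun i => monomial 1 (ι R (f (v i))))
        (fun i => monomial 0 (ι R (v i))))).prod =
      monomial S.card (ιMulti R p (S.piecewise (f ∘ v) v)) := by
    have hS : S.card = ∑ i, if i ∈ S then 1 else 0 := by simp
    rw [ιMulti_apply, hS, ← Polynomial.prod_ofFn_monomial]
    congr 2
    funext i
    by_cases hi : i ∈ S <;> simp [hi]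
  have h := (MultilinearMap.mkPiAlgebraFin R p (ExteriorAlgebra R M)[X]).map_add_univ
    (fun i => monomial 1 (ι R (f (v i)))) (fun i => monomial 0 (ι R (v i)))
  simp only [MultilinearMap.mkPiAlgebraFin_apply, key] at h
  rw [divPow_apply, ιMulti_apply, map_list_prod, List.map_ofFn]
  have h' : (taylor f ∘ fun i => ι R (v i)) =
      (fun i => monomial 1 (ι R (f (v i)))) + (fun i => monomial 0 (ι R (v i))) := by
    funext i
    simp [taylor_ι, add_comm]
  rw [h', h, finsetSum_coeff]
  simp only [coeff_monomial]
  rw [← Finset.sum_filter]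
  congr 1
  ext S
  simp [Finset.mem_powersetCard]

end ExteriorAlgebra

namespace MMS

section Shuffles

theorem strictMono_castAdd_of_mem_shuffles {p q : ℕ} {σ : Equiv.Perm (Fin (p + q))}
    (hσ : σ ∈ shuffles p q) : StrictMono fun i => σ (Fin.castAdd q i) := fun i j hij =>
  (Finset.mem_filter.1 hσ).2.1 _ _ (by simpa only [Fin.lt_def, Fin.val_castAdd] using hij) (by simp)

theorem strictMono_natAdd_of_mem_shuffles {p q : ℕ} {σ : Equiv.Perm (Fin (p + q))}
    (hσ : σ ∈ shuffles p q) : StrictMono fun i => σ (Fin.natAdd p i) := fun i j hij =>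
  (Finset.mem_filter.1 hσ).2.2 _ _ (by simpa using hij) (by simp)

/-- The image under `σ` of the last `q` indices. -/
def tailImage (p q : ℕ) (σ : Equiv.Perm (Fin (p + q))) : Finset (Fin (p + q)) :=
  Finset.univ.image fun j => σ (Fin.natAdd p j)

theorem natAdd_mem_tailImage {p q : ℕ} (σ : Equiv.Perm (Fin (p + q))) (j : Fin q) :
    σ (Fin.natAdd p j) ∈ tailImage p q σ := Finset.mem_image_of_mem _ (Finset.mem_univ j)

theorem castAdd_notMem_tailImage {p q : ℕ} (σ : Equiv.Perm (Fin (p + q))) (i : Fin p) :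
    σ (Fin.castAdd q i) ∉ tailImage p q σ := by
  simp only [tailImage, Finset.mem_image, Finset.mem_univ, true_and, EmbeddingLike.apply_eq_iff_eq,
    not_exists, Fin.ext_iff, Fin.val_natAdd, Fin.val_castAdd]
  omega

theorem card_tailImage {p q : ℕ} (σ : Equiv.Perm (Fin (p + q))) : (tailImage p q σ).card = q := by
  refine (Finset.card_image_of_injective _ ?_).trans (Finset.card_fin q)
  exact σ.injective.comp (Fin.natAdd_injective q p)

theorem injOn_tailImage (p q : ℕ) : Set.InjOn (tailImage p q) (shuffles p q) := by
  intro σ hσ τ hτ h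
  have hc : (tailImage p q σ)ᶜ.card = p := by
    rw [Finset.card_compl, card_tailImage, Fintype.card_fin, Nat.add_sub_cancel]
  have h1 : (fun j => σ (Fin.natAdd p j)) = fun j => τ (Fin.natAdd p j) :=
    (Finset.orderEmbOfFin_unique (card_tailImage σ) (natAdd_mem_tailImage σ)
      (strictMono_natAdd_of_mem_shuffles hσ)).trans
    (Finset.orderEmbOfFin_unique (card_tailImage σ) (fun j => h ▸ natAdd_mem_tailImage τ j)
      (strictMono_natAdd_of_mem_shuffles hτ)).symm
  have h2 : (fun j => σ (Fin.castAdd q j)) = fun j => τ (Fin.castAdd q j) :=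
    (Finset.orderEmbOfFin_unique hc
      (fun j => Finset.mem_compl.2 (castAdd_notMem_tailImage σ j))
      (strictMono_castAdd_of_mem_shuffles hσ)).trans
    (Finset.orderEmbOfFin_unique hc
      (fun j => Finset.mem_compl.2 (h ▸ castAdd_notMem_tailImage τ j))
      (strictMono_castAdd_of_mem_shuffles hτ)).symm
  ext i : 1
  induction i using Fin.addCases with
  | left i => exact congrFun h2 i
  | right j => exact congrFun h1 j

theorem exists_shuffle_tailImage_eq {p q : ℕ} {S : Finset (Fin (p + q))} (hS : S.card = q) :
    ∃ σ ∈ shuffles p q, tailImage p q σ = S := by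
  have hc : Sᶜ.card = p := by
    rw [Finset.card_compl, hS, Fintype.card_fin, Nat.add_sub_cancel]
  have hcc : Sᶜᶜ.card = q := by rwa [compl_compl]
  let σ : Equiv.Perm (Fin (p + q)) := finSumFinEquiv.symm.trans (finSumEquivOfFinset hc hcc)
  have hl (i : Fin p) : σ (Fin.castAdd q i) = Sᶜ.orderEmbOfFin hc i := by simp [σ]
  have hr (j : Fin q) : σ (Fin.natAdd p j) = Sᶜᶜ.orderEmbOfFin hcc j := by simp [σ]
  refine ⟨σ, Finset.mem_filter.2 ⟨Finset.mem_univ _, ?_, ?_⟩, ?_⟩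
  · intro i j hij hj
    induction i using Fin.addCases with
    | left i =>
      induction j using Fin.addCases with
      | left j =>
        rw [hl, hl]
        exact (Sᶜ.orderEmbOfFin hc).strictMono
          (by simpa only [Fin.lt_def, Fin.val_castAdd] using hij)
      | right j => simp at hj
    | right i =>
      rw [Fin.lt_def, Fin.val_natAdd] at hij
      omega
  · intro i j hij hi
    induction i using Fin.addCases with
    | left i => simp at hi; omega
    | right i =>
      induction j using Fin.addCases with
      | left j =>
        rw [Fin.lt_def, Fin.val_castAdd, Fin.val_natAdd] at hij
        omega
      | right j => rw [hr, hr]; exact (Sᶜᶜ.orderEmbOfFin hcc).strictMono (by simpa using hij)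
  · refine Finset.eq_of_subset_of_card_le ?_ (by rw [hS, card_tailImage])
    intro x hx
    obtain ⟨j, -, rfl⟩ := Finset.mem_image.1 hx
    rw [hr]
    simpa only [compl_compl] using Finset.orderEmbOfFin_mem _ hcc j

/-- A signed sum over `(p,q)`-shuffles of the values of an alternating map is the sum over
`q`-element subsets. -/
theorem sum_shuffles_alternatingMap {R M N : Type*} [CommRing R] [AddCommGroup M] [Module R M]
    [AddCommGroup N] [Module R N] {p q : ℕ} (g : M [⋀^Fin (p + q)]→ₗ[R] N)
    (α β : Fin (p + q) → M) :
    ∑ σ ∈ shuffles p q, (Equiv.Perm.sign σ : ℤ) •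
      g (Fin.append (fun i => α (σ (Fin.castAdd q i))) (fun j => β (σ (Fin.natAdd p j)))) =
    ∑ S ∈ Finset.powersetCard q (Finset.univ : Finset (Fin (p + q))), g (S.piecewise β α) := by
  refine Finset.sum_nbij (tailImage p q)
    (fun σ _ => Finset.mem_powersetCard.2 ⟨Finset.subset_univ _, card_tailImage σ⟩)
    (injOn_tailImage p q)
    (fun S hS => exists_shuffle_tailImage_eq (Finset.mem_powersetCard.1 hS).2) ?_
  intro σ _
  have h : Fin.append (fun i => α (σ (Fin.castAdd q i))) (fun j => β (σ (Fin.natAdd p j))) =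
      (tailImage p q σ).piecewise β α ∘ σ := by
    funext i
    induction i using Fin.addCases with
    | left i => simp [castAdd_notMem_tailImage]
    | right j => simp [natAdd_mem_tailImage]
  rw [h, g.map_perm, Units.smul_def, smul_smul, ← Units.val_mul, Int.units_mul_self,
    Units.val_one, one_smul]

end Shuffles

end MMS

namespace MMS

section Exchange

variable (K : Type) [Field K] (n : ℕ)

/-- The exterior algebra `Λ(V ⊕ V)`, in which `Λ^p ⊗ Λ^q` sits in bidegree `(p, q)`. -/
abbrev LamSum : Type := ExteriorAlgebra K (V K n × V K n)

/-- The embedding `Λ(V) → Λ(V ⊕ V)` induced by the first inclusion. -/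
def embL : ExteriorAlgebra K (V K n) →ₐ[K] LamSum K n :=
  ExteriorAlgebra.map (LinearMap.inl K (V K n) (V K n))

/-- The embedding `Λ(V) → Λ(V ⊕ V)` induced by the second inclusion. -/
def embR : ExteriorAlgebra K (V K n) →ₐ[K] LamSum K n :=
  ExteriorAlgebra.map (LinearMap.inr K (V K n) (V K n))

/-- The endomorphism of `V ⊕ V` moving the first summand onto the second one. -/
def lower : V K n × V K n →ₗ[K] V K n × V K n :=
  LinearMap.inr K (V K n) (V K n) ∘ₗ LinearMap.fst K (V K n) (V K n)

theorem lower_comp_lower : lower K n ∘ₗ lower K n = 0 := by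
  ext <;> simp [lower]

/-- The divided powers of the derivation of `Λ(V ⊕ V)` extending `lower`. -/
abbrev lowerPow (k : ℕ) : LamSum K n →ₗ[K] LamSum K n := ExteriorAlgebra.divPow (lower K n) k

/-- The embedding of `Λ^p ⊗ Λ^q` as the part of bidegree `(p, q)` of `Λ(V ⊕ V)`. -/
def emb (p q : ℕ) : Lam K n p ⊗[K] Lam K n q →ₗ[K] LamSum K n :=
  LinearMap.mul' K (LamSum K n) ∘ₗ
    TensorProduct.map ((embL K n).toLinearMap ∘ₗ Submodule.subtype _)
      ((embR K n).toLinearMap ∘ₗ Submodule.subtype _)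

variable {K n}

theorem emb_tmul {p q : ℕ} (u : Lam K n p) (w : Lam K n q) :
    emb K n p q (u ⊗ₜ w) = embL K n u * embR K n w := by
  simp [emb]

theorem emb_injective (p q : ℕ) : Function.Injective (emb K n p q) := by
  let gr : ℕ → Submodule K (ExteriorAlgebra K (V K n)) := fun i => ⋀[K]^i (V K n)
  let incl : V K n × V K n →ₗ[K] GradedTensorProduct K gr gr :=
    LinearMap.coprod
      ((GradedTensorProduct.includeLeft gr gr).toLinearMap ∘ₗ ExteriorAlgebra.ι K)
      ((GradedTensorProduct.includeRight gr gr).toLinearMap ∘ₗ ExteriorAlgebra.ι K)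
  have hι (m : V K n) : ExteriorAlgebra.ι K m ∈ gr 1 := by
    simp [gr, ExteriorAlgebra.exteriorPower]
  have hincl (m : V K n × V K n) : incl m * incl m = 0 := by
    have h := GradedTensorProduct.tmul_coe_mul_coe_tmul (R := K) gr gr 1
      ⟨_, hι m.2⟩ ⟨_, hι m.1⟩ 1
    have h1 : GradedTensorProduct.includeLeft gr gr (ExteriorAlgebra.ι K m.1) *
        GradedTensorProduct.includeRight gr gr (ExteriorAlgebra.ι K m.2) =
        GradedTensorProduct.tmul K (ExteriorAlgebra.ι K m.1) (ExteriorAlgebra.ι K m.2) :=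
      GradedTensorProduct.tmul_one_mul_one_tmul gr gr _ _
    have h2 : GradedTensorProduct.includeRight gr gr (ExteriorAlgebra.ι K m.2) *
        GradedTensorProduct.includeLeft gr gr (ExteriorAlgebra.ι K m.1) =
        - GradedTensorProduct.tmul K (ExteriorAlgebra.ι K m.1) (ExteriorAlgebra.ι K m.2) := by
      refine h.trans ?_
      simp
    simp only [incl, LinearMap.coprod_apply, LinearMap.comp_apply, AlgHom.toLinearMap_apply,
      add_mul, mul_add, h1, h2, ← map_mul, ExteriorAlgebra.ι_sq_zero, map_zero]
    simp
  let ret : LamSum K n →ₐ[K] GradedTensorProduct K gr gr := ExteriorAlgebra.lift K ⟨incl, hincl⟩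
  have hL : ret.comp (embL K n) = GradedTensorProduct.includeLeft gr gr := by
    ext m
    simp [ret, embL, incl]
  have hR : ret.comp (embR K n) = GradedTensorProduct.includeRight gr gr := by
    ext m
    simp [ret, embR, incl]
  have hret : ret.toLinearMap ∘ₗ emb K n p q =
      (GradedTensorProduct.of K gr gr).toLinearMap ∘ₗ
        TensorProduct.map (Submodule.subtype _) (Submodule.subtype _) := by
    refine TensorProduct.ext' fun u w => ?_
    have h1 := DFunLike.congr_fun hL (u : ExteriorAlgebra K (V K n))
    have h2 := DFunLike.congr_fun hR (w : ExteriorAlgebra K (V K n))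
    rw [AlgHom.comp_apply] at h1 h2
    simp only [LinearMap.comp_apply, emb_tmul, AlgHom.toLinearMap_apply, map_mul, h1, h2]
    exact GradedTensorProduct.tmul_one_mul_one_tmul gr gr _ _
  refine Function.Injective.of_comp (f := ret) ?_
  have : Function.Injective (ret.toLinearMap ∘ₗ emb K n p q) := by
    rw [hret]
    exact (GradedTensorProduct.of K gr gr).injective.comp
      (TensorProduct.map_injective_of_flat_flat _ _ (Submodule.subtype_injective _)
        (Submodule.subtype_injective _))
  exact this

theorem coe_ecast {p q : ℕ} (h : p = q) (x : Lam K n p) :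
    (ecast K n h x : ExteriorAlgebra K (V K n)) = x := by
  subst h
  rfl

theorem emb_congr_ecast {p q p' q' : ℕ} (hp : p = p') (hq : q = q')
    (T : Lam K n p ⊗[K] Lam K n q) :
    emb K n p' q' (TensorProduct.congr (ecast K n hp) (ecast K n hq) T) = emb K n p q T := by
  subst hp hq
  induction T with
  | zero => simp
  | add x y hx hy => rw [map_add, map_add, hx, hy, map_add]
  | tmul x y => rw [TensorProduct.congr_tmul, emb_tmul, emb_tmul, coe_ecast, coe_ecast]

variable {mf : ∀ p q : ℕ, Lam K n p ⊗[K] Lam K n q →ₗ[K] Lam K n (p+q)}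
  {Df : ∀ p q : ℕ, Lam K n (p+q) →ₗ[K] Lam K n p ⊗[K] Lam K n q}

theorem IsMulMap.coe_apply_tmul {p q : ℕ} {m : Lam K n p ⊗[K] Lam K n q →ₗ[K] Lam K n (p+q)}
    (hm : IsMulMap K n p q m) (u : Lam K n p) (w : Lam K n q) :
    (m (u ⊗ₜ w) : ExteriorAlgebra K (V K n)) = u * w := by
  have h : (Submodule.subtype _ ∘ₗ m) = LinearMap.mul' K (ExteriorAlgebra K (V K n)) ∘ₗ
      TensorProduct.map (Submodule.subtype _) (Submodule.subtype _) := by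
    refine TensorProduct.ext ?_
    refine exteriorPower.linearMap_ext (AlternatingMap.ext fun v => ?_)
    refine exteriorPower.linearMap_ext (AlternatingMap.ext fun w => ?_)
    have := congrArg Subtype.val (hm v w)
    simp only [LinearMap.compAlternatingMap_apply, TensorProduct.mk_apply,
      LinearMap.comp_apply, TensorProduct.map_tmul, LinearMap.mul'_apply, Submodule.subtype_apply,
      exteriorPower.ιMulti_apply_coe, LinearMap.compr₂ₛₗ_apply]
    rw [ExteriorAlgebra.ιMulti_mul_ιMulti]
    exact this
  simpa using LinearMap.congr_fun h (u ⊗ₜ w)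

/-- Comultiplication becomes a divided power of the lowering derivation in `Λ(V ⊕ V)`. -/
theorem IsComulMap.emb_apply {p q : ℕ} {D : Lam K n (p+q) →ₗ[K] Lam K n p ⊗[K] Lam K n q}
    (hD : IsComulMap K n p q D) (x : Lam K n (p + q)) :
    emb K n p q (D x) = lowerPow K n q (embL K n x) := by
  have h : emb K n p q ∘ₗ D = lowerPow K n q ∘ₗ (embL K n).toLinearMap ∘ₗ Submodule.subtype _ := by
    refine exteriorPower.linearMap_ext (AlternatingMap.ext fun v => ?_)
    have h1 : D (exteriorPower.ιMulti K (p + q) v) = _ := hD v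
    have h2 (σ : Equiv.Perm (Fin (p + q))) :
        emb K n p q (wedge K n (fun i => v (σ (Fin.castAdd q i))) ⊗ₜ[K]
            wedge K n (fun i => v (σ (Fin.natAdd p i)))) =
        ExteriorAlgebra.ιMulti K (p + q)
          (Fin.append (fun i => (LinearMap.inl K (V K n) (V K n) ∘ v) (σ (Fin.castAdd q i)))
            (fun i => (lower K n ∘ LinearMap.inl K (V K n) (V K n) ∘ v)
              (σ (Fin.natAdd p i)))) := by
      rw [emb_tmul, ← ExteriorAlgebra.ιMulti_mul_ιMulti]
      simp only [wedge, embL, embR, ExteriorAlgebra.map_apply_ιMulti]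
      rfl
    simp only [LinearMap.compAlternatingMap_apply, LinearMap.comp_apply, h1, map_sum, map_zsmul,
      h2, sum_shuffles_alternatingMap, Submodule.subtype_apply, AlgHom.toLinearMap_apply,
      exteriorPower.ιMulti_apply_coe, embL, ExteriorAlgebra.map_apply_ιMulti,
      ExteriorAlgebra.divPow_ιMulti]
  exact LinearMap.congr_fun h x

theorem lowerPow_embL_eq_zero {p q : ℕ} (hpq : p < q) (x : Lam K n p) :
    lowerPow K n q (embL K n x) = 0 := by
  have h : lowerPow K n q ∘ₗ (embL K n).toLinearMap ∘ₗ Submodule.subtype (⋀[K]^p (V K n)) = 0 := by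
    refine exteriorPower.linearMap_ext (AlternatingMap.ext fun v => ?_)
    simp only [LinearMap.compAlternatingMap_apply, LinearMap.comp_apply, Submodule.subtype_apply,
      AlgHom.toLinearMap_apply, exteriorPower.ιMulti_apply_coe, embL,
      ExteriorAlgebra.map_apply_ιMulti, ExteriorAlgebra.divPow_ιMulti]
    rw [Finset.powersetCard_eq_empty.2 (by simpa using hpq)]
    simp
  exact LinearMap.congr_fun h x

theorem lowerPow_one_embR (x : ExteriorAlgebra K (V K n)) :
    lowerPow K n 1 (embR K n x) = 0 := by
  have h : (ExteriorAlgebra.taylor (lower K n)).comp (embR K n) =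
      (Polynomial.CAlgHom (R := K)).comp (embR K n) := by
    refine ExteriorAlgebra.hom_ext (LinearMap.ext fun m => ?_)
    simp [embR, ExteriorAlgebra.taylor_ι, lower]
  have h' := DFunLike.congr_fun h x
  rw [AlgHom.comp_apply] at h'
  rw [ExteriorAlgebra.divPow_apply, h']
  simp

/-- The Koszul sign relating `pairMul` to the product of `Λ(V ⊕ V)`. -/
theorem emb_pairMul (hmf : ∀ p q, IsMulMap K n p q (mf p q)) {p₁ q₁ p₂ q₂ : ℕ}
    (S : Lam K n p₁ ⊗[K] Lam K n q₁) (T : Lam K n p₂ ⊗[K] Lam K n q₂) :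
    emb K n (p₁ + p₂) (q₁ + q₂) (pairMul K n mf p₁ q₁ p₂ q₂ (S ⊗ₜ T)) =
      (-1 : K) ^ (q₁ * p₂) • (emb K n p₁ q₁ S * emb K n p₂ q₂ T) := by
  induction S with
  | zero => simp
  | add x y hx hy => simp only [TensorProduct.add_tmul, map_add, hx, hy, add_mul, smul_add]
  | tmul u w =>
    induction T with
    | zero => simp
    | add x y hx hy => simp only [TensorProduct.tmul_add, map_add, hx, hy, mul_add, smul_add]
    | tmul u' w' =>
      have h : embR K n w * embL K n u' = (-1 : K) ^ (q₁ * p₂) • (embL K n u' * embR K n w) :=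
        ExteriorAlgebra.mul_comm_of_mem_exteriorPower
          (ExteriorAlgebra.map_mem_exteriorPower _ w.2)
          (ExteriorAlgebra.map_mem_exteriorPower _ u'.2)
      simp only [pairMul, LinearMap.comp_apply, LinearEquiv.coe_coe,
        TensorProduct.tensorTensorTensorComm_tmul, TensorProduct.map_tmul, emb_tmul,
        (hmf _ _).coe_apply_tmul, map_mul]
      rw [mul_assoc (embL K n u) (embR K n w), ← mul_assoc (embR K n w), h, smul_mul_assoc,
        mul_smul_comm, smul_smul, ← mul_pow, neg_one_mul, neg_neg, one_pow, one_smul]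
      simp only [mul_assoc]

theorem emb_theta1 (hmf : ∀ p q, IsMulMap K n p q (mf p q))
    (hDf : ∀ p q, IsComulMap K n p q (Df p q)) {a b : ℕ} (hb : 1 ≤ b)
    (S : Lam K n (a + 1) ⊗[K] Lam K n (b - 1)) :
    emb K n a b (theta1 K n mf Df a b hb S) = lowerPow K n 1 (emb K n (a + 1) (b - 1) S) := by
  rw [theta1, LinearMap.comp_apply, LinearEquiv.coe_coe, emb_congr_ecast]
  induction S with
  | zero => simp
  | add x y hx hy => simp only [map_add, hx, hy]
  | tmul u w =>
    have key (T : Lam K n (a + 1 - 1) ⊗[K] Lam K n 1) :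
        emb K n (a + 1 - 1) (b - 1 + 1) (TensorProduct.map LinearMap.id
          ((ecast K n (by omega : 1 + (b - 1) = b - 1 + 1)).toLinearMap ∘ₗ mf 1 (b - 1))
          (TensorProduct.assoc K _ _ _ (T ⊗ₜ w))) = emb K n (a + 1 - 1) 1 T * embR K n w := by
      induction T with
      | zero => simp
      | add x y hx hy => simp only [TensorProduct.add_tmul, map_add, hx, hy, add_mul]
      | tmul x y =>
        simp only [TensorProduct.assoc_tmul, TensorProduct.map_tmul, LinearMap.id_apply,
          LinearMap.comp_apply, LinearEquiv.coe_coe, emb_tmul, coe_ecast,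
          (hmf _ _).coe_apply_tmul, map_mul, mul_assoc]
    rw [thetaMap, LinearMap.comp_apply, LinearMap.comp_apply, TensorProduct.map_tmul,
      LinearEquiv.coe_coe, LinearMap.id_apply, key, LinearMap.comp_apply, (hDf _ _).emb_apply,
      LinearEquiv.coe_coe, coe_ecast, emb_tmul, ExteriorAlgebra.divPow_one_mul, lowerPow_one_embR,
      mul_zero, add_zero]

variable (K n) in
/-- The part of bidegree `(p, q)` of `Λ(V ⊕ V)`. -/
def bideg (p q : ℕ) : Submodule K (LamSum K n) := LinearMap.range (emb K n p q)

variable (mf Df) in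
/-- The relations of the Schur module, as a submodule of `Λ(V ⊕ V)`. -/
def embRel (a b : ℕ) : Submodule K (LamSum K n) :=
  (schurRel K n mf Df a b).map (emb K n a b)

theorem mul_mem_bideg (hmf : ∀ p q, IsMulMap K n p q (mf p q)) {p q r s : ℕ} {X W : LamSum K n}
    (hX : X ∈ bideg K n p q) (hW : W ∈ bideg K n r s) : X * W ∈ bideg K n (p + r) (q + s) := by
  obtain ⟨S, rfl⟩ := hX
  obtain ⟨T, rfl⟩ := hW
  refine ⟨(-1 : K) ^ (q * r) • pairMul K n mf p q r s (S ⊗ₜ T), ?_⟩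
  rw [map_smul, emb_pairMul hmf, smul_smul, ← mul_pow, neg_one_mul, neg_neg, one_pow, one_smul]

theorem lowerPow_one_emb_mem_embRel (hmf : ∀ p q, IsMulMap K n p q (mf p q))
    (hDf : ∀ p q, IsComulMap K n p q (Df p q)) {a b : ℕ} (hb : 1 ≤ b)
    (S : Lam K n (a + 1) ⊗[K] Lam K n (b - 1)) :
    lowerPow K n 1 (emb K n (a + 1) (b - 1) S) ∈ embRel mf Df a b := by
  rw [← emb_theta1 hmf hDf hb S, embRel]
  refine Submodule.mem_map_of_mem ?_
  rw [schurRel, dif_pos hb]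
  exact LinearMap.mem_range_self _ S

theorem lowerPow_one_mem_embRel (hmf : ∀ p q, IsMulMap K n p q (mf p q))
    (hDf : ∀ p q, IsComulMap K n p q (Df p q)) {p q : ℕ} {X : LamSum K n}
    (hX : X ∈ bideg K n (p + 1) q) : lowerPow K n 1 X ∈ embRel mf Df p (q + 1) := by
  obtain ⟨b, hb, hbq⟩ : ∃ b, 1 ≤ b ∧ b - 1 = q := ⟨q + 1, Nat.le_add_left 1 q, rfl⟩
  obtain rfl : b = q + 1 := by omega
  rw [← hbq] at hX
  obtain ⟨S, rfl⟩ := hX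
  exact lowerPow_one_emb_mem_embRel hmf hDf hb S

theorem embRel_le_bideg (a b : ℕ) : embRel mf Df a b ≤ bideg K n a b :=
  LinearMap.map_le_range

theorem lowerPow_one_eq_zero_of_mem_bideg {q : ℕ} {X : LamSum K n} (hX : X ∈ bideg K n 0 q) :
    lowerPow K n 1 X = 0 := by
  obtain ⟨S, rfl⟩ := hX
  induction S with
  | zero => simp
  | add x y hx hy => rw [map_add, map_add, hx, hy, add_zero]
  | tmul u w =>
    rw [emb_tmul, ExteriorAlgebra.divPow_one_mul, lowerPow_one_embR,
      lowerPow_embL_eq_zero one_pos]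
    simp

variable [CharZero K]

theorem lowerPow_one_lowerPow (k : ℕ) (x : LamSum K n) :
    lowerPow K n 1 (lowerPow K n k x) = (k + 1 : K) • lowerPow K n (k + 1) x := by
  have hk : (k.factorial : K) ≠ 0 := Nat.cast_ne_zero.2 k.factorial_ne_zero
  refine smul_right_injective _ hk ?_
  simp only
  rw [← map_smul, ← ExteriorAlgebra.iterate_divPow_one (lower_comp_lower K n), smul_smul,
    ← Function.iterate_succ_apply' (lowerPow K n 1),
    ExteriorAlgebra.iterate_divPow_one (lower_comp_lower K n), Nat.factorial_succ]
  push_cast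
  rw [mul_comm]

theorem lowerPow_lowerPow (k l : ℕ) (x : LamSum K n) :
    lowerPow K n k (lowerPow K n l x) = ((l + k).choose l : K) • lowerPow K n (l + k) x := by
  induction k with
  | zero => simp [ExteriorAlgebra.divPow_zero]
  | succ k ih =>
    have hk : (k + 1 : K) ≠ 0 := Nat.cast_add_one_ne_zero k
    refine smul_right_injective _ hk ?_
    simp only
    rw [← lowerPow_one_lowerPow, ih, map_smul, lowerPow_one_lowerPow, smul_smul, smul_smul]
    congr 1
    have := Nat.choose_mul_succ_eq (l + k) l
    rw [show l + k + 1 - l = k + 1 by omega] at this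
    rw [mul_comm (k + 1 : K)]
    exact_mod_cast this

theorem lowerPow_mem_bideg (hmf : ∀ p q, IsMulMap K n p q (mf p q))
    (hDf : ∀ p q, IsComulMap K n p q (Df p q)) {p q k : ℕ} {X : LamSum K n}
    (hX : X ∈ bideg K n (p + k) q) : lowerPow K n k X ∈ bideg K n p (q + k) := by
  induction k generalizing p with
  | zero => simpa [ExteriorAlgebra.divPow_zero] using hX
  | succ k ih =>
    have hk : (k + 1 : K) ≠ 0 := Nat.cast_add_one_ne_zero k
    rw [← Submodule.smul_mem_iff _ hk, ← lowerPow_one_lowerPow]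
    refine embRel_le_bideg _ _ (lowerPow_one_mem_embRel hmf hDf (ih ?_))
    rwa [add_assoc, add_comm 1]

/-- Integration by parts: modulo the relations of the Schur module, a divided power of the lowering
derivation can be moved, up to sign, from one factor of a product to the other one. -/
theorem lowerPow_mul_sub_mem_embRel (hmf : ∀ p q, IsMulMap K n p q (mf p q))
    (hDf : ∀ p q, IsComulMap K n p q (Df p q)) {p q r s : ℕ} (k : ℕ) {X W : LamSum K n}
    (hX : X ∈ bideg K n (p + k) q) (hW : W ∈ bideg K n r s) :
    lowerPow K n k X * W - (-1 : K) ^ k • (X * lowerPow K n k W) ∈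
      embRel mf Df (p + r) (q + s + k) := by
  induction k generalizing p r s W with
  | zero => simp [ExteriorAlgebra.divPow_zero]
  | succ k ih =>
    have hX' : X ∈ bideg K n (p + 1 + k) q := by rwa [add_assoc, add_comm 1]
    have hk : (k + 1 : K) ≠ 0 := Nat.cast_add_one_ne_zero k
    have h1 : lowerPow K n 1 (lowerPow K n k X * W) ∈ embRel mf Df (p + r) (q + s + (k + 1)) := by
      rw [show q + s + (k + 1) = q + k + s + 1 by omega]
      refine lowerPow_one_mem_embRel hmf hDf ?_
      rw [show p + r + 1 = p + 1 + r by omega]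
      exact mul_mem_bideg hmf (lowerPow_mem_bideg hmf hDf hX') hW
    have h2 : lowerPow K n k X * lowerPow K n 1 W -
        (-1 : K) ^ k • (X * lowerPow K n k (lowerPow K n 1 W)) ∈
          embRel mf Df (p + r) (q + s + (k + 1)) := by
      cases r with
      | zero => simp [lowerPow_one_eq_zero_of_mem_bideg hW]
      | succ r =>
        rw [show p + (r + 1) = p + 1 + r by omega,
          show q + s + (k + 1) = q + (s + 1) + k by omega]
        exact ih hX' (embRel_le_bideg _ _ (lowerPow_one_mem_embRel hmf hDf hW))
    rw [← Submodule.smul_mem_iff _ hk]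
    convert! sub_mem h1 h2 using 1
    rw [ExteriorAlgebra.divPow_one_mul, lowerPow_one_lowerPow,
      ExteriorAlgebra.divPow_divPow_one (lower_comp_lower K n), smul_mul_assoc, mul_smul_comm,
      pow_succ]
    module

end Exchange

end MMS

namespace MMS

/-- Lemma 3.1 ("exchange lemma") of the paper. With `a = a₁+a₂+a₃ ≥ b = b₁+b₂+b₃`
and `b₁ ≤ a₂+a₃`, for `x ∈ Λ^{a₁+b₁}`, `y ∈ Λ^{a₂+b₂}`, `z ∈ Λ^{a₃+b₃}` and
`ω = Σ_{u,v,w} x_u(a₁)∧y_v(a₂)∧z_w(a₃) ⊗ x'_u(b₁)∧y'_v(b₂)∧z'_w(b₃)`, we have in `L_{(a,b)}`: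
`π(ω) = (−1)^{(a₂+a₃+1)b₁} Σ_{i₂+i₃=b₁, i₂≤a₂, i₃≤a₃} (−1)^{i₂(a₃−i₃)+i₃b₂}
  C(b₂+i₂,b₂) C(b₃+i₃,b₃) π(Σ_{v,w} x∧y_v(a₂−i₂)∧z_w(a₃−i₃) ⊗ y'_v(b₂+i₂)∧z'_w(b₃+i₃))`. -/
theorem statement4 (K : Type) [Field K] [CharZero K] (n : ℕ)
    (a₁ a₂ a₃ b₁ b₂ b₃ : ℕ)
    (hab : b₁+b₂+b₃ ≤ a₁+a₂+a₃) (hb1 : b₁ ≤ a₂ + a₃)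
    (mf : ∀ p q : ℕ, Lam K n p ⊗[K] Lam K n q →ₗ[K] Lam K n (p+q))
    (Df : ∀ p q : ℕ, Lam K n (p+q) →ₗ[K] Lam K n p ⊗[K] Lam K n q)
    (hmf : ∀ p q, IsMulMap K n p q (mf p q))
    (hDf : ∀ p q, IsComulMap K n p q (Df p q))
    (x : Lam K n (a₁+b₁)) (y : Lam K n (a₂+b₂)) (z : Lam K n (a₃+b₃)) :
    schurProj K n mf Df (a₁+a₂+a₃) (b₁+b₂+b₃)
        (pairMul K n mf (a₁+a₂) (b₁+b₂) a₃ b₃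
          ((pairMul K n mf a₁ b₁ a₂ b₂ ((Df a₁ b₁ x) ⊗ₜ[K] (Df a₂ b₂ y)))
            ⊗ₜ[K] (Df a₃ b₃ z))) =
      (-1:K) ^ ((a₂+a₃+1)*b₁) •
        ∑ i₂ ∈ Finset.range (b₁+1),
          if h : i₂ ≤ b₁ ∧ i₂ ≤ a₂ ∧ b₁ - i₂ ≤ a₃ then
            (((-1:K) ^ (i₂*(a₃-(b₁-i₂)) + (b₁-i₂)*b₂)) * ((b₂+i₂).choose b₂ : K) *
                ((b₃+(b₁-i₂)).choose b₃ : K)) •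
              schurProj K n mf Df (a₁+a₂+a₃) (b₁+b₂+b₃)
                ((TensorProduct.congr
                    (ecast K n
                      (by omega : ((a₁+b₁)+(a₂-i₂))+(a₃-(b₁-i₂)) = a₁+a₂+a₃))
                    (ecast K n
                      (by omega : (0+(b₂+i₂))+(b₃+(b₁-i₂)) = b₁+b₂+b₃))).toLinearMap
                  (pairMul K n mf ((a₁+b₁)+(a₂-i₂)) (0+(b₂+i₂)) (a₃-(b₁-i₂)) (b₃+(b₁-i₂))
                    ((pairMul K n mf (a₁+b₁) 0 (a₂-i₂) (b₂+i₂)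
                      ((x ⊗ₜ[K] wedge K n (fun j : Fin 0 => j.elim0)) ⊗ₜ[K]
                        (Df (a₂-i₂) (b₂+i₂)
                          (ecast K n (by omega : a₂+b₂ = (a₂-i₂)+(b₂+i₂)) y))))
                      ⊗ₜ[K]
                      (Df (a₃-(b₁-i₂)) (b₃+(b₁-i₂))
                        (ecast K n
                          (by omega : a₃+b₃ = (a₃-(b₁-i₂))+(b₃+(b₁-i₂))) z)))))
          else 0 := by
  set X := embL K n x with hX
  set Y := embL K n y with hY
  set Z := embL K n z with hZ
  have hle : schurRel K n mf Df (a₁+a₂+a₃) (b₁+b₂+b₃) ≤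
      (embRel mf Df (a₁+a₂+a₃) (b₁+b₂+b₃)).comap (emb K n _ _) := Submodule.le_comap_map _ _
  let ι : SchurL K n mf Df (a₁+a₂+a₃) (b₁+b₂+b₃) →ₗ[K]
      LamSum K n ⧸ embRel mf Df (a₁+a₂+a₃) (b₁+b₂+b₃) :=
    Submodule.mapQ _ _ (emb K n _ _) hle
  have hι : Function.Injective ι := by
    rw [← LinearMap.ker_eq_bot]
    change LinearMap.ker (Submodule.mapQ _ _ _ _) = ⊥
    rw [Submodule.ker_mapQ, embRel,
      Submodule.comap_map_eq_of_injective (emb_injective _ _), Submodule.mkQ_map_self]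
  have hιmk (T : Lam K n (a₁+a₂+a₃) ⊗[K] Lam K n (b₁+b₂+b₃)) :
      ι (schurProj K n mf Df _ _ T) = (embRel mf Df _ _).mkQ (emb K n _ _ T) := rfl
  have hXmem : X ∈ bideg K n (a₁ + b₁) 0 :=
    ⟨x ⊗ₜ wedge K n (fun j : Fin 0 => j.elim0), by simp [emb_tmul, wedge, hX]⟩
  have hWmem : lowerPow K n b₂ Y * lowerPow K n b₃ Z ∈ bideg K n (a₂ + a₃) (b₂ + b₃) :=
    mul_mem_bideg hmf ⟨Df a₂ b₂ y, (hDf _ _).emb_apply y⟩ ⟨Df a₃ b₃ z, (hDf _ _).emb_apply z⟩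
  have hparts := lowerPow_mul_sub_mem_embRel hmf hDf b₁ hXmem hWmem
  rw [show a₁ + (a₂ + a₃) = a₁ + a₂ + a₃ by omega,
    show 0 + (b₂ + b₃) + b₁ = b₁ + b₂ + b₃ by omega, ← Submodule.Quotient.mk_eq_zero,
    Submodule.Quotient.mk_sub, sub_eq_zero] at hparts
  simp only [← Submodule.mkQ_apply] at hparts
  apply hι
  rw [hιmk, emb_pairMul hmf, emb_pairMul hmf, (hDf _ _).emb_apply, (hDf _ _).emb_apply,
    (hDf _ _).emb_apply, ← hX, ← hY, ← hZ, smul_mul_assoc, mul_assoc, map_smul, map_smul, hparts,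
    ExteriorAlgebra.divPow_mul, Finset.Nat.sum_antidiagonal_eq_sum_range_succ_mk, map_smul,
    Finset.mul_sum, map_sum, map_smul, map_sum]
  simp only [Finset.smul_sum]
  refine Finset.sum_congr rfl fun i hi => ?_
  have hib : i ≤ b₁ := Nat.lt_succ_iff.1 (Finset.mem_range.1 hi)
  rw [lowerPow_lowerPow, lowerPow_lowerPow]
  split_ifs with h
  · have hone : embR K n (wedge K n (fun j : Fin 0 => j.elim0) : Lam K n 0) = 1 := by
      simp [wedge]
    rw [map_smul, hιmk, LinearEquiv.coe_coe, emb_congr_ecast, emb_pairMul hmf, emb_pairMul hmf,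
      (hDf _ _).emb_apply, (hDf _ _).emb_apply, coe_ecast, coe_ecast, emb_tmul, hone, mul_one,
      ← hX, ← hY, ← hZ]
    obtain ⟨j, rfl⟩ := Nat.exists_eq_add_of_le hib
    rw [Nat.add_sub_cancel_left] at h ⊢
    obtain ⟨c, rfl⟩ := Nat.exists_eq_add_of_le h.2.2
    rw [Nat.add_sub_cancel_left]
    simp only [zero_mul, pow_zero, one_smul, mul_smul_comm, smul_mul_assoc, map_smul, smul_smul,
      mul_assoc]
    congr 1
    have hsign : (-1 : K) ^ ((a₂ + (j + c) + 1) * (i + j)) *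
        ((-1) ^ (i * c + j * b₂) * (-1) ^ ((0 + (b₂ + i)) * c)) =
        (-1) ^ ((i + j + b₂) * (j + c)) * ((-1) ^ ((i + j) * a₂) * (-1) ^ (i + j)) := by
      simp only [← pow_add]
      rw [show (a₂ + (j + c) + 1) * (i + j) + (i * c + j * b₂ + (0 + (b₂ + i)) * c) =
        (i + j + b₂) * (j + c) + ((i + j) * a₂ + (i + j)) + 2 * (i * c) by ring,
        pow_add _ _ (2 * (i * c)), pow_mul _ 2, neg_one_sq, one_pow, mul_one]
    linear_combination -((b₃ + j).choose b₃ : K) * ((b₂ + i).choose b₂ : K) * hsign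
  · have h0 : lowerPow K n (b₂ + i) Y * lowerPow K n (b₃ + (b₁ - i)) Z = 0 := by
      rcases not_and_or.1 (fun h' => h ⟨hib, h'⟩) with h' | h'
      · have hy0 : lowerPow K n (b₂ + i) Y = 0 := lowerPow_embL_eq_zero (by omega) y
        rw [hy0, zero_mul]
      · have hz0 : lowerPow K n (b₃ + (b₁ - i)) Z = 0 := lowerPow_embL_eq_zero (by omega) z
        rw [hz0, mul_zero]
    rw [smul_mul_smul_comm, h0]
    simp

end MMS
end
end

section
/- Let a, b, s, t be nonnegative integers. Then, as maps defined on Λ^a⊗Λ^b: if s+t ≤ b, then δ_s∘δ_t = C(s+t,t)·δ_{s+t} (where the second δ_s is the map Λ^{a+t}⊗Λ^{b−t} → Λ^{a+t+s}⊗Λ^{b−t−s}); and if s+t ≤ a, then θ_s∘θ_t = C(s+t,t)·θ_{s+t} (where the second θ_s is the map Λ^{a−t}⊗Λ^{b+t} → Λ^{a−t−s}⊗Λ^{b+t+s}). -/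
open TensorProduct

set_option synthInstance.maxHeartbeats 1000000
set_option maxSynthPendingDepth 3
set_option maxHeartbeats 1000000

noncomputable section

namespace MMS

section Combinatorics

variable {M : Type*} [AddCommGroup M]

/-- The permutation of `Fin (p + q)` acting by `α` on the first `p` and by `β` on the last `q`
indices. -/
def blockPerm {p q : ℕ} (α : Equiv.Perm (Fin p)) (β : Equiv.Perm (Fin q)) :
    Equiv.Perm (Fin (p + q)) :=
  finSumFinEquiv.permCongr (Equiv.Perm.sumCongr α β)

@[simp]
lemma blockPerm_castAdd {p q : ℕ} (α : Equiv.Perm (Fin p)) (β : Equiv.Perm (Fin q)) (i : Fin p) :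
    blockPerm α β (Fin.castAdd q i) = Fin.castAdd q (α i) := by
  simp [blockPerm, Equiv.permCongr_apply]

@[simp]
lemma blockPerm_natAdd {p q : ℕ} (α : Equiv.Perm (Fin p)) (β : Equiv.Perm (Fin q)) (i : Fin q) :
    blockPerm α β (Fin.natAdd p i) = Fin.natAdd p (β i) := by
  simp [blockPerm, Equiv.permCongr_apply]

@[simp]
lemma sign_blockPerm {p q : ℕ} (α : Equiv.Perm (Fin p)) (β : Equiv.Perm (Fin q)) :
    Equiv.Perm.sign (blockPerm α β) = Equiv.Perm.sign α * Equiv.Perm.sign β := by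
  simp [blockPerm]

lemma mem_shuffles_iff {p q : ℕ} (σ : Equiv.Perm (Fin (p + q))) :
    σ ∈ shuffles p q ↔
      StrictMono (fun i : Fin p => σ (Fin.castAdd q i)) ∧
        StrictMono (fun i : Fin q => σ (Fin.natAdd p i)) := by
  simp only [shuffles, Finset.mem_filter, Finset.mem_univ, true_and]
  constructor
  · rintro ⟨h₁, h₂⟩
    exact ⟨fun i j hij => h₁ _ _ (Fin.lt_def.2 (Fin.lt_def.1 hij)) (by simp),
      fun i j hij => h₂ _ _ (by simpa using hij) (by simp)⟩
  · rintro ⟨h₁, h₂⟩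
    refine ⟨fun i j hij hj => ?_, fun i j hij hi => ?_⟩
    · have := @h₁ ⟨i, lt_trans hij hj⟩ ⟨j, hj⟩ hij
      simpa using this
    · have hi' : Fin.natAdd p (⟨i - p, by omega⟩ : Fin q) = i := by ext; simp; omega
      have hj' : Fin.natAdd p (⟨j - p, by omega⟩ : Fin q) = j := by ext; simp; omega
      have := @h₂ ⟨i - p, by omega⟩ ⟨j - p, by omega⟩ (by simp [Fin.lt_def]; omega)
      simpa only [hi', hj'] using this

/-- Every permutation factors uniquely as a shuffle times a block permutation. -/
lemma sum_perm_eq_sum_shuffles {p q : ℕ} (F : Equiv.Perm (Fin (p + q)) → M) :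
    ∑ π, F π = ∑ σ ∈ shuffles p q, ∑ α : Equiv.Perm (Fin p), ∑ β : Equiv.Perm (Fin q),
      F (σ * blockPerm α β) := by
  simp_rw [← Finset.sum_product']
  symm
  refine Finset.sum_bij (fun x _ => x.1 * blockPerm x.2.1 x.2.2) (by simp) ?_ ?_ (by simp)
  · rintro ⟨σ, α, β⟩ h ⟨σ', α', β'⟩ h' heq
    simp only [Finset.mem_product, mem_shuffles_iff, Finset.mem_univ, and_true] at h h'
    have e₁ (i : Fin p) : σ (Fin.castAdd q (α i)) = σ' (Fin.castAdd q (α' i)) := by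
      simpa using congrArg (fun π => π (Fin.castAdd q i)) heq
    have e₂ (i : Fin q) : σ (Fin.natAdd p (β i)) = σ' (Fin.natAdd p (β' i)) := by
      simpa using congrArg (fun π => π (Fin.natAdd p i)) heq
    have f₁ : (fun i : Fin p => σ (Fin.castAdd q i)) = fun i => σ' (Fin.castAdd q i) := by
      refine (StrictMono.range_inj h.1 h'.1).1 ?_
      rw [← α.surjective.range_comp (fun i => σ (Fin.castAdd q i)),
        ← α'.surjective.range_comp (fun i => σ' (Fin.castAdd q i))]
      exact congrArg Set.range (funext e₁)
    have f₂ : (fun i : Fin q => σ (Fin.natAdd p i)) = fun i => σ' (Fin.natAdd p i) := by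
      refine (StrictMono.range_inj h.2 h'.2).1 ?_
      rw [← β.surjective.range_comp (fun i => σ (Fin.natAdd p i)),
        ← β'.surjective.range_comp (fun i => σ' (Fin.natAdd p i))]
      exact congrArg Set.range (funext e₂)
    obtain rfl : σ = σ' :=
      Equiv.ext fun i => Fin.addCases (fun i => congrFun f₁ i) (fun i => congrFun f₂ i) i
    obtain rfl : α = α' := Equiv.ext fun i => by simpa using e₁ i
    obtain rfl : β = β' := Equiv.ext fun i => by simpa using e₂ i
    rfl
  · intro π _
    set f : Fin p → Fin (p + q) := fun i => π (Fin.castAdd q i)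
    set g : Fin q → Fin (p + q) := fun i => π (Fin.natAdd p i)
    have hf : Function.Injective f := π.injective.comp (Fin.castAdd_injective p q)
    have hg : Function.Injective g := π.injective.comp (Fin.natAdd_injective q p)
    refine ⟨(π * blockPerm (Tuple.sort f) (Tuple.sort g),
      (Tuple.sort f)⁻¹, (Tuple.sort g)⁻¹), ?_, ?_⟩
    · simp only [Finset.mem_product, mem_shuffles_iff, Finset.mem_univ, and_true,
        Equiv.Perm.mul_apply, blockPerm_castAdd, blockPerm_natAdd]
      exact ⟨(Tuple.monotone_sort f).strictMono_of_injective
          (hf.comp (Tuple.sort f).injective),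
        (Tuple.monotone_sort g).strictMono_of_injective (hg.comp (Tuple.sort g).injective)⟩
    · refine Equiv.ext fun i => Fin.addCases (fun i => ?_) (fun i => ?_) i <;> simp

/-- Averaging an alternating sum over the permutations of a subset of the indices. -/
lemma sum_sum_sign_smul_viaFintypeEmbedding {m b : ℕ} (e : Fin m ↪ Fin b)
    (F : Equiv.Perm (Fin b) → M) :
    ∑ σ : Equiv.Perm (Fin b), (Equiv.Perm.sign σ : ℤ) • ∑ τ : Equiv.Perm (Fin m),
        (Equiv.Perm.sign τ : ℤ) • F (σ * τ.viaFintypeEmbedding e) =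
      m.factorial • ∑ σ : Equiv.Perm (Fin b), (Equiv.Perm.sign σ : ℤ) • F σ := by
  simp_rw [Finset.smul_sum]
  rw [Finset.sum_comm]
  have (τ : Equiv.Perm (Fin m)) :
      ∑ σ : Equiv.Perm (Fin b), (Equiv.Perm.sign σ : ℤ) • (Equiv.Perm.sign τ : ℤ) •
        F (σ * τ.viaFintypeEmbedding e) =
      ∑ σ : Equiv.Perm (Fin b), (Equiv.Perm.sign σ : ℤ) • F σ := by
    rw [← Equiv.sum_comp (Equiv.mulRight (τ.viaFintypeEmbedding e))
      (fun σ => (Equiv.Perm.sign σ : ℤ) • F σ)]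
    simp [mul_smul]
  simp_rw [this, ← Finset.smul_sum]
  simp [Finset.card_univ, Fintype.card_perm]

end Combinatorics

section Wedge

variable {K : Type} [Field K] {n : ℕ}

lemma wedge_perm {p : ℕ} (v : Fin p → V K n) (α : Equiv.Perm (Fin p)) :
    wedge K n (fun i => v (α i)) = (Equiv.Perm.sign α : ℤ) • wedge K n v :=
  (exteriorPower.ιMulti K p (M := V K n)).map_perm v α

lemma ecast_wedge {p q : ℕ} (h : p = q) (v : Fin p → V K n) :
    ecast K n h (wedge K n v) = wedge K n (fun i => v (Fin.cast h.symm i)) := by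
  subst h
  rfl

lemma tensor_ext_wedge {p q : ℕ} {M : Type*} [AddCommGroup M] [Module K M]
    {f g : Lam K n p ⊗[K] Lam K n q →ₗ[K] M}
    (h : ∀ v w, f (wedge K n v ⊗ₜ[K] wedge K n w) = g (wedge K n v ⊗ₜ[K] wedge K n w)) :
    f = g := by
  refine TensorProduct.ext ?_
  refine LinearMap.ext_on_range (v := exteriorPower.ιMulti K p (M := V K n))
    (exteriorPower.ιMulti_span K p (V K n)) fun v => ?_
  refine LinearMap.ext_on_range (v := exteriorPower.ιMulti K q (M := V K n))
    (exteriorPower.ιMulti_span K q (V K n)) fun w => ?_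
  exact h v w

lemma IsComulMap.factorial_smul_apply_wedge {p q : ℕ}
    {D : Lam K n (p + q) →ₗ[K] Lam K n p ⊗[K] Lam K n q} (hD : IsComulMap K n p q D)
    (v : Fin (p + q) → V K n) :
    (p.factorial * q.factorial) • D (wedge K n v) =
      ∑ σ : Equiv.Perm (Fin (p + q)), (Equiv.Perm.sign σ : ℤ) •
        (wedge K n (fun i => v (σ (Fin.castAdd q i))) ⊗ₜ[K]
          wedge K n (fun i => v (σ (Fin.natAdd p i)))) := by
  rw [hD, sum_perm_eq_sum_shuffles, Finset.smul_sum]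
  refine Finset.sum_congr rfl fun σ _ => ?_
  have (α : Equiv.Perm (Fin p)) (β : Equiv.Perm (Fin q)) :
      (Equiv.Perm.sign (σ * blockPerm α β) : ℤ) •
        (wedge K n (fun i => v ((σ * blockPerm α β) (Fin.castAdd q i))) ⊗ₜ[K]
          wedge K n (fun i => v ((σ * blockPerm α β) (Fin.natAdd p i)))) =
      (Equiv.Perm.sign σ : ℤ) • (wedge K n (fun i => v (σ (Fin.castAdd q i))) ⊗ₜ[K]
          wedge K n (fun i => v (σ (Fin.natAdd p i)))) := by
    simp only [Equiv.Perm.mul_apply, blockPerm_castAdd, blockPerm_natAdd]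
    rw [wedge_perm (fun i => v (σ (Fin.castAdd q i))) α,
      wedge_perm (fun i => v (σ (Fin.natAdd p i))) β]
    rcases Int.units_eq_one_or (Equiv.Perm.sign α) with hα | hα <;>
    rcases Int.units_eq_one_or (Equiv.Perm.sign β) with hβ | hβ <;>
    simp [hα, hβ, TensorProduct.neg_tmul, TensorProduct.tmul_neg]
  simp_rw [this]
  simp [Finset.card_univ, Fintype.card_perm, mul_smul]

/-- The index shift `Fin m → Fin b`, `i ↦ c + i`. -/
def shiftEmb {m b : ℕ} (c : ℕ) (h : c + m ≤ b) : Fin m ↪ Fin b where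
  toFun i := ⟨c + i, by omega⟩
  inj' i j hij := by simpa [Fin.ext_iff] using hij

@[simp]
lemma shiftEmb_val {m b : ℕ} (c : ℕ) (h : c + m ≤ b) (i : Fin m) :
    (shiftEmb c h i : ℕ) = c + i := rfl

lemma IsComulMap.factorial_smul_apply_ecast_wedge {p q b : ℕ}
    {D : Lam K n (p + q) →ₗ[K] Lam K n p ⊗[K] Lam K n q} (hD : IsComulMap K n p q D)
    (h : b = p + q) (v : Fin b → V K n) :
    (p.factorial * q.factorial) • D (ecast K n h (wedge K n v)) =
      ∑ σ : Equiv.Perm (Fin b), (Equiv.Perm.sign σ : ℤ) •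
        (wedge K n (fun i => v (σ (shiftEmb 0 (by omega) i))) ⊗ₜ[K]
          wedge K n (fun i => v (σ (shiftEmb p h.ge i)))) := by
  subst h
  rw [ecast_wedge, hD.factorial_smul_apply_wedge]
  have e₁ (i : Fin p) : shiftEmb 0 (by omega) i = Fin.castAdd q i := by ext; simp
  have e₂ (i : Fin q) : shiftEmb p le_rfl i = Fin.natAdd p i := by ext; simp
  simp only [e₁, e₂, Fin.cast_eq_self]

end Wedge

section DeltaTheta

variable {K : Type} [Field K] {n : ℕ}
  {mf : ∀ p q : ℕ, Lam K n p ⊗[K] Lam K n q →ₗ[K] Lam K n (p + q)}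
  {Df : ∀ p q : ℕ, Lam K n (p + q) →ₗ[K] Lam K n p ⊗[K] Lam K n q}

lemma factorial_smul_deltaMap (hmf : ∀ p q, IsMulMap K n p q (mf p q))
    (hDf : ∀ p q, IsComulMap K n p q (Df p q)) (a b t : ℕ) (ht : t ≤ b)
    (x : Fin a → V K n) (y : Fin b → V K n) :
    (t.factorial * (b - t).factorial) •
        deltaMap K n mf Df a b t ht (wedge K n x ⊗ₜ[K] wedge K n y) =
      ∑ σ : Equiv.Perm (Fin b), (Equiv.Perm.sign σ : ℤ) •
        (wedge K n (Fin.append x fun i => y (σ (shiftEmb 0 (by omega) i))) ⊗ₜ[K]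
          wedge K n (fun i => y (σ (shiftEmb t (by omega) i)))) := by
  simp only [deltaMap, LinearMap.comp_apply, TensorProduct.map_tmul, LinearMap.id_apply,
    LinearEquiv.coe_coe]
  rw [← map_nsmul, ← map_nsmul, ← TensorProduct.tmul_smul,
    (hDf _ _).factorial_smul_apply_ecast_wedge]
  simp only [TensorProduct.tmul_sum, map_sum, TensorProduct.tmul_smul, map_zsmul,
    TensorProduct.assoc_symm_tmul, TensorProduct.map_tmul, LinearMap.id_apply]
  simp only [hmf _ _ _ _]

lemma factorial_smul_thetaMap (hmf : ∀ p q, IsMulMap K n p q (mf p q))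
    (hDf : ∀ p q, IsComulMap K n p q (Df p q)) (a b t : ℕ) (ht : t ≤ a)
    (x : Fin a → V K n) (y : Fin b → V K n) :
    ((a - t).factorial * t.factorial) •
        thetaMap K n mf Df a b t ht (wedge K n x ⊗ₜ[K] wedge K n y) =
      ∑ σ : Equiv.Perm (Fin a), (Equiv.Perm.sign σ : ℤ) •
        (wedge K n (fun i => x (σ (shiftEmb 0 (by omega) i))) ⊗ₜ[K]
          wedge K n (fun i => Fin.append (fun i => x (σ (shiftEmb (a - t) (by omega) i))) y
            (Fin.cast (Nat.add_comm b t) i))) := by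
  simp only [thetaMap, LinearMap.comp_apply, TensorProduct.map_tmul, LinearMap.id_apply,
    LinearEquiv.coe_coe]
  rw [← map_nsmul, ← map_nsmul, TensorProduct.smul_tmul',
    (hDf _ _).factorial_smul_apply_ecast_wedge]
  simp only [TensorProduct.sum_tmul, map_sum]
  refine Finset.sum_congr rfl fun σ _ => ?_
  simp only [← Int.cast_smul_eq_zsmul K]
  rw [← TensorProduct.smul_tmul', map_smul, map_smul, TensorProduct.assoc_tmul,
    TensorProduct.map_tmul, LinearMap.id_apply, LinearMap.comp_apply, LinearEquiv.coe_coe, hmf,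
    ecast_wedge]

lemma viaFintypeEmbedding_shiftEmb_of_notMem {m k b c d : ℕ} (h : c + m ≤ b)
    (τ : Equiv.Perm (Fin m)) (hd : d + k ≤ b) (hk : d + k ≤ c ∨ c + m ≤ d) (i : Fin k) :
    τ.viaFintypeEmbedding (shiftEmb c h) (shiftEmb d hd i) = shiftEmb d hd i := by
  refine Equiv.Perm.viaFintypeEmbedding_apply_notMem_range _ _ ?_
  rintro ⟨j, hj⟩
  have := congrArg Fin.val hj
  simp only [shiftEmb_val] at this
  omega

lemma viaFintypeEmbedding_shiftEmb {m k b c d e : ℕ} (h : c + m ≤ b)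
    (τ : Equiv.Perm (Fin m)) (hd : d + k ≤ b) (he : e + k ≤ m) (hde : d = c + e) (i : Fin k) :
    τ.viaFintypeEmbedding (shiftEmb c h) (shiftEmb d hd i) =
      shiftEmb c h (τ (shiftEmb e he i)) := by
  rw [← Equiv.Perm.viaFintypeEmbedding_apply_image]
  congr 1
  ext
  simp only [shiftEmb_val]
  omega

lemma append_eq_dite {α : Type*} {p q : ℕ} (u : Fin p → α) (v : Fin q → α) (i : Fin (p + q)) :
    Fin.append u v i =
      if h : (i : ℕ) < p then u ⟨i, h⟩ else v ⟨i - p, by omega⟩ := by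
  refine Fin.addCases (fun i => ?_) (fun i => ?_) i <;> simp

lemma eq_choose_smul_of_factorial_smul [CharZero K] {M : Type*} [AddCommGroup M] [Module K M]
    {X Y : M} {s t r m : ℕ}
    (h : (s.factorial * r.factorial) • (t.factorial * m.factorial) • X =
      m.factorial • ((s + t).factorial * r.factorial) • Y) :
    X = ((s + t).choose t : K) • Y := by
  have hc := Nat.choose_mul_factorial_mul_factorial (Nat.le_add_left t s)
  rw [Nat.add_sub_cancel] at hc
  simp only [← Nat.cast_smul_eq_nsmul K, smul_smul] at h
  have h0 : ((s.factorial * r.factorial * (t.factorial * m.factorial) : ℕ) : K) ≠ 0 := by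
    simp [Nat.factorial_ne_zero]
  refine smul_right_injective M h0 ?_
  simp only [smul_smul]
  push_cast at h ⊢
  rw [h, ← hc]
  congr 1
  push_cast
  ring

lemma factorial_smul_deltaMap_deltaMap (hmf : ∀ p q, IsMulMap K n p q (mf p q))
    (hDf : ∀ p q, IsComulMap K n p q (Df p q)) (a b s t : ℕ) (ht : t ≤ b) (hs : s ≤ b - t)
    (x : Fin a → V K n) (y : Fin b → V K n) :
    (s.factorial * (b - t - s).factorial) • (t.factorial * (b - t).factorial) •
        deltaMap K n mf Df (a + t) (b - t) s hs
          (deltaMap K n mf Df a b t ht (wedge K n x ⊗ₜ[K] wedge K n y)) =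
      (b - t).factorial • ∑ σ : Equiv.Perm (Fin b), (Equiv.Perm.sign σ : ℤ) •
        (wedge K n (Fin.append (Fin.append x fun i => y (σ (shiftEmb 0 (by omega) i)))
            fun i => y (σ (shiftEmb t (by omega) i))) ⊗ₜ[K]
          wedge K n (fun i => y (σ (shiftEmb (t + s) (by omega) i)))) := by
  rw [← map_nsmul, factorial_smul_deltaMap hmf hDf, map_sum, Finset.smul_sum,
    ← sum_sum_sign_smul_viaFintypeEmbedding (shiftEmb t (by omega : t + (b - t) ≤ b))]
  refine Finset.sum_congr rfl fun σ _ => ?_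
  rw [map_zsmul, smul_comm, factorial_smul_deltaMap hmf hDf]
  congr 1
  refine Finset.sum_congr rfl fun τ _ => ?_
  have e₁ (i : Fin t) := viaFintypeEmbedding_shiftEmb_of_notMem
    (by omega : t + (b - t) ≤ b) τ (by omega : 0 + t ≤ b) (by omega) i
  have e₂ (i : Fin s) := viaFintypeEmbedding_shiftEmb
    (by omega : t + (b - t) ≤ b) τ (by omega : t + s ≤ b)
    (by omega : 0 + s ≤ b - t) (by omega) i
  have e₃ (i : Fin (b - t - s)) := viaFintypeEmbedding_shiftEmb
    (by omega : t + (b - t) ≤ b) τ (by omega : t + s + (b - t - s) ≤ b)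
    (by omega : s + (b - t - s) ≤ b - t) (by omega) i
  simp only [Equiv.Perm.mul_apply, e₁, e₂, e₃]

lemma factorial_smul_thetaMap_thetaMap (hmf : ∀ p q, IsMulMap K n p q (mf p q))
    (hDf : ∀ p q, IsComulMap K n p q (Df p q)) (a b s t : ℕ) (ht : t ≤ a) (hs : s ≤ a - t)
    (x : Fin a → V K n) (y : Fin b → V K n) :
    ((a - t - s).factorial * s.factorial) • ((a - t).factorial * t.factorial) •
        thetaMap K n mf Df (a - t) (b + t) s hs
          (thetaMap K n mf Df a b t ht (wedge K n x ⊗ₜ[K] wedge K n y)) =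
      (a - t).factorial • ∑ σ : Equiv.Perm (Fin a), (Equiv.Perm.sign σ : ℤ) •
        (wedge K n (fun i => x (σ (shiftEmb 0 (by omega) i))) ⊗ₜ[K]
          wedge K n (fun i => Fin.append
            (fun i => x (σ (shiftEmb (a - t - s) (by omega) i)))
            (fun i => Fin.append (fun i => x (σ (shiftEmb (a - t) (by omega) i))) y
              (Fin.cast (Nat.add_comm b t) i)) (Fin.cast (Nat.add_comm (b + t) s) i))) := by
  rw [← map_nsmul, factorial_smul_thetaMap hmf hDf, map_sum, Finset.smul_sum,
    ← sum_sum_sign_smul_viaFintypeEmbedding (shiftEmb 0 (by omega : 0 + (a - t) ≤ a))]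
  refine Finset.sum_congr rfl fun σ _ => ?_
  rw [map_zsmul, smul_comm, factorial_smul_thetaMap hmf hDf]
  congr 1
  refine Finset.sum_congr rfl fun τ _ => ?_
  have e₁ (i : Fin t) := viaFintypeEmbedding_shiftEmb_of_notMem
    (by omega : 0 + (a - t) ≤ a) τ (by omega : a - t + t ≤ a) (by omega) i
  have e₂ (i : Fin s) := viaFintypeEmbedding_shiftEmb
    (by omega : 0 + (a - t) ≤ a) τ (by omega : a - t - s + s ≤ a)
    (by omega : a - t - s + s ≤ a - t) (by omega) i
  have e₃ (i : Fin (a - t - s)) := viaFintypeEmbedding_shiftEmb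
    (by omega : 0 + (a - t) ≤ a) τ (by omega : 0 + (a - t - s) ≤ a)
    (by omega : 0 + (a - t - s) ≤ a - t) (by omega) i
  simp only [Equiv.Perm.mul_apply, e₁, e₂, e₃]

lemma deltaMap_comp_deltaMap [CharZero K] (hmf : ∀ p q, IsMulMap K n p q (mf p q))
    (hDf : ∀ p q, IsComulMap K n p q (Df p q)) (a b s t : ℕ) (h : s + t ≤ b)
    (ht : t ≤ b) (hs : s ≤ b - t)
    (ha : a + (s + t) = a + t + s) (hb : b - (s + t) = b - t - s) :
    deltaMap K n mf Df (a + t) (b - t) s hs ∘ₗ deltaMap K n mf Df a b t ht =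
      ((s + t).choose t : K) •
        ((TensorProduct.congr (ecast K n ha) (ecast K n hb)).toLinearMap
          ∘ₗ deltaMap K n mf Df a b (s + t) h) := by
  refine tensor_ext_wedge fun x y => ?_
  simp only [LinearMap.comp_apply, LinearMap.smul_apply, LinearEquiv.coe_coe]
  refine eq_choose_smul_of_factorial_smul
    ((factorial_smul_deltaMap_deltaMap hmf hDf a b s t ht hs x y).trans ?_)
  rw [show (b - t - s).factorial = (b - (s + t)).factorial by congr 1; omega, ← map_nsmul,
    factorial_smul_deltaMap hmf hDf, map_sum]
  congr 1
  refine Finset.sum_congr rfl fun σ _ => ?_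
  rw [map_zsmul, TensorProduct.congr_tmul, ecast_wedge, ecast_wedge]
  congr 3
  · funext i
    simp only [append_eq_dite, Fin.val_cast]
    split_ifs <;> first | omega | rfl | (congr 2; ext; simp; omega)
  · funext i
    congr 2
    ext
    simp
    omega

lemma thetaMap_comp_thetaMap [CharZero K] (hmf : ∀ p q, IsMulMap K n p q (mf p q))
    (hDf : ∀ p q, IsComulMap K n p q (Df p q)) (a b s t : ℕ) (h : s + t ≤ a)
    (ht : t ≤ a) (hs : s ≤ a - t)
    (ha : a - (s + t) = a - t - s) (hb : b + (s + t) = b + t + s) :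
    thetaMap K n mf Df (a - t) (b + t) s hs ∘ₗ thetaMap K n mf Df a b t ht =
      ((s + t).choose t : K) •
        ((TensorProduct.congr (ecast K n ha) (ecast K n hb)).toLinearMap
          ∘ₗ thetaMap K n mf Df a b (s + t) h) := by
  refine tensor_ext_wedge fun x y => ?_
  simp only [LinearMap.comp_apply, LinearMap.smul_apply, LinearEquiv.coe_coe]
  have key := factorial_smul_thetaMap_thetaMap hmf hDf a b s t ht hs x y
  rw [mul_comm (a - t - s).factorial, mul_comm (a - t).factorial] at key
  refine eq_choose_smul_of_factorial_smul (key.trans ?_)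
  rw [show (a - t - s).factorial = (a - (s + t)).factorial by congr 1; omega, ← map_nsmul,
    mul_comm (s + t).factorial, factorial_smul_thetaMap hmf hDf, map_sum]
  congr 1
  refine Finset.sum_congr rfl fun σ _ => ?_
  rw [map_zsmul, TensorProduct.congr_tmul, ecast_wedge, ecast_wedge]
  congr 3
  · funext i
    simp only [append_eq_dite, Fin.val_cast]
    split_ifs <;> first | omega | rfl | (congr 2; omega) | (congr 2; ext; simp; omega)

end DeltaTheta

/-- `δ_s ∘ δ_t = C(s+t,t)·δ_{s+t}` (for `s+t ≤ b`) and `θ_s ∘ θ_t = C(s+t,t)·θ_{s+t}`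
(for `s+t ≤ a`), as maps defined on `Λ^a ⊗ Λ^b`. -/
theorem statement5 (K : Type) [Field K] [CharZero K] (n : ℕ) (a b s t : ℕ)
    (mf : ∀ p q : ℕ, Lam K n p ⊗[K] Lam K n q →ₗ[K] Lam K n (p+q))
    (Df : ∀ p q : ℕ, Lam K n (p+q) →ₗ[K] Lam K n p ⊗[K] Lam K n q)
    (hmf : ∀ p q, IsMulMap K n p q (mf p q))
    (hDf : ∀ p q, IsComulMap K n p q (Df p q)) :
    (∀ h : s + t ≤ b,
      deltaMap K n mf Df (a+t) (b-t) s (by omega) ∘ₗ deltaMap K n mf Df a b t (by omega) =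
        ((s+t).choose t : K) •
          ((TensorProduct.congr (ecast K n (by omega : a+(s+t) = (a+t)+s))
              (ecast K n (by omega : b-(s+t) = (b-t)-s))).toLinearMap
            ∘ₗ deltaMap K n mf Df a b (s+t) h)) ∧
    (∀ h : s + t ≤ a,
      thetaMap K n mf Df (a-t) (b+t) s (by omega) ∘ₗ thetaMap K n mf Df a b t (by omega) =
        ((s+t).choose t : K) •
          ((TensorProduct.congr (ecast K n (by omega : a-(s+t) = (a-t)-s))
              (ecast K n (by omega : b+(s+t) = (b+t)+s))).toLinearMap
            ∘ₗ thetaMap K n mf Df a b (s+t) h)) := by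
  exact ⟨fun h => deltaMap_comp_deltaMap hmf hDf a b s t h _ _ _ _,
    fun h => thetaMap_comp_thetaMap hmf hDf a b s t h _ _ _ _⟩

end MMS
end
end
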